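/- arXiv:1104.5007 — 2 statements merged into one kernel-verified Lean document; each statement's English description precedes it below -/
import Mathlib

section
/- For every integer t ≥ 1 there exists a constant C_t such that for every integer n ≥ 1 there exists an n×n (0,1)-matrix that avoids DS_{2t+3} and has at least 2^{(1/t!)·α(n)^t − C_t·α(n)^{t−1}} 1-entries in every column; in particular, ex_{DS_{2t+3}}(n) ≥ n·2^{(1/t!)·α(n)^t − C_t·α(n)^{t−1}}. -/
/-! ## Inverse Ackermann hierarchy -/

/-- Bounded-fuel iteration counter: number of applications of `f` needed to bring `m`
down to a value `≤ 1` (assuming `f` strictly decreases on values `≥ 2`). -/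
def iterCount (f : ℕ → ℕ) : ℕ → ℕ → ℕ
  | 0, _ => 0
  | fuel + 1, m => if m ≤ 1 then 0 else 1 + iterCount f fuel (f m)

/-- The inverse Ackermann hierarchy: `alphaHier 1 m = ⌈m/2⌉`, `alphaHier d 1 = 0` for `d ≥ 2`,
and `alphaHier d m = 1 + alphaHier d (alphaHier (d-1) m)` for `m, d ≥ 2`. -/
def alphaHier : ℕ → ℕ → ℕ
  | 0, m => m
  | 1, m => (m + 1) / 2
  | d + 2, m => iterCount (alphaHier (d + 1)) m m

/-- The inverse Ackermann function `α(m) = min {k ≥ 1 : α_k(m) ≤ 3}`. -/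
noncomputable def invAck (m : ℕ) : ℕ := sInf {k : ℕ | 1 ≤ k ∧ alphaHier k m ≤ 3}

/-! ## Permutations, restrictions, VC-dimension -/

/-- The restriction of the `n`-permutation `π` to the (increasing) `k`-tuple of positions `a`
is the `k`-permutation `σ`. -/
def PermRestrictionIs {n k : ℕ} (π : Equiv.Perm (Fin n)) (a : Fin k → Fin n)
    (σ : Equiv.Perm (Fin k)) : Prop :=
  ∀ i j : Fin k, σ i < σ j ↔ π (a i) < π (a j)

/-- The `k`-tuple of positions `a` is shattered by the family `P` of `n`-permutations. -/
def Shatters {n k : ℕ} (P : Finset (Equiv.Perm (Fin n))) (a : Fin k → Fin n) : Prop :=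
  StrictMono a ∧ ∀ σ : Equiv.Perm (Fin k), ∃ π ∈ P, PermRestrictionIs π a σ

/-- The family `P` of `n`-permutations has VC-dimension at most `k`:
no `(k+1)`-tuple of positions is shattered by `P`. -/
def VCDimLE (n k : ℕ) (P : Finset (Equiv.Perm (Fin n))) : Prop :=
  ∀ a : Fin (k + 1) → Fin n, ¬ Shatters P a

/-- The number of `1`-entries of the union of the permutation matrices of a family `P`
of `n`-permutations. -/
noncomputable def permOnes {n : ℕ} (P : Finset (Equiv.Perm (Fin n))) : ℕ :=
  Nat.card {p : Fin n × Fin n // ∃ π ∈ P, π p.2 = p.1}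

/-- `v(P) = |M_P| / n`, the average number of `1`-entries per column of the union
of the permutation matrices of the family `P`. -/
noncomputable def vPerm {n : ℕ} (P : Finset (Equiv.Perm (Fin n))) : ℝ :=
  (permOnes P : ℝ) / (n : ℝ)

/-! ## (0,1)-matrices -/

/-- The number of `1`-entries of a `(0,1)`-matrix (represented as a `Bool` matrix). -/
noncomputable def matOnes {m n : ℕ} (M : Fin m → Fin n → Bool) : ℕ :=
  Nat.card {p : Fin m × Fin n // M p.1 p.2 = true}

/-- The number of `1`-entries in column `j` of a `(0,1)`-matrix. -/
noncomputable def colOnes {m n : ℕ} (M : Fin m → Fin n → Bool) (j : Fin n) : ℕ :=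
  Nat.card {i : Fin m // M i j = true}

/-- The matrix `B` contains the matrix `S`. -/
def MatContains {m n p q : ℕ} (B : Fin m → Fin n → Bool) (S : Fin p → Fin q → Bool) : Prop :=
  ∃ (r : Fin p → Fin m) (c : Fin q → Fin n), StrictMono r ∧ StrictMono c ∧
    ∀ a b, S a b = true → B (r a) (c b) = true

/-- The `s × 2` matrix `DS_s`, with a `1`-entry in (1-indexed) row `i` and column `j`
exactly when `i + j` is odd. -/
def DS (s : ℕ) : Fin s → Fin 2 → Bool :=
  fun i j => decide ((i.val + j.val) % 2 = 1)

/-- The maximum number of `1`-entries in an `n × n` matrix avoiding `S`. -/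
noncomputable def exMat {p q : ℕ} (S : Fin p → Fin q → Bool) (n : ℕ) : ℕ :=
  sSup {x : ℕ | ∃ M : Fin n → Fin n → Bool, ¬ MatContains M S ∧ matOnes M = x}

/-- An `n × n` matrix is `k`-full if some increasing `k`-tuple of columns contains
every `k`-permutation matrix. -/
def IsFull (k : ℕ) {n : ℕ} (M : Fin n → Fin n → Bool) : Prop :=
  ∃ c : Fin k → Fin n, StrictMono c ∧ ∀ σ : Equiv.Perm (Fin k),
    ∃ r : Fin k → Fin n, StrictMono r ∧ ∀ b : Fin k, M (r (σ b)) (c b) = true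

/-- `pFull k n` is the maximum number of `1`-entries in an `n × n` matrix that is
not `(k+1)`-full. -/
noncomputable def pFull (k n : ℕ) : ℕ :=
  sSup {x : ℕ | ∃ M : Fin n → Fin n → Bool, ¬ IsFull (k + 1) M ∧ matOnes M = x}

/-! ## Formations -/

/-- `M` contains a `B`-fat `(r,s)`-formation: there are an `s`-partition of the rows into
intervals (the fibers of a monotone map `g`) and `r` columns, each having at least `B`
`1`-entries in every interval. -/
def FatFormation (B r s : ℕ) {m n : ℕ} (M : Fin m → Fin n → Bool) : Prop :=
  ∃ g : Fin m → Fin s, Monotone g ∧ ∃ c : Fin r → Fin n, StrictMono c ∧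
    ∀ (j : Fin r) (i : Fin s), B ≤ Nat.card {x : Fin m // g x = i ∧ M x (c j) = true}

/-- `M` contains a doubled `(r,s)`-formation: there are an `s`-partition of the rows into
intervals and `r` columns, each having at least one `1`-entry in the first and last
interval and at least two `1`-entries in every other interval. -/
def DoubledFormation (r s : ℕ) {m n : ℕ} (M : Fin m → Fin n → Bool) : Prop :=
  ∃ g : Fin m → Fin s, Monotone g ∧ ∃ c : Fin r → Fin n, StrictMono c ∧
    ∀ (j : Fin r) (i : Fin s),
      1 ≤ Nat.card {x : Fin m // g x = i ∧ M x (c j) = true} ∧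
      (i.val ≠ 0 → i.val ≠ s - 1 → 2 ≤ Nat.card {x : Fin m // g x = i ∧ M x (c j) = true})

/-! ## The functions R, D, β -/

/-- Nivasch's hierarchy `R_s(d)` (shifted as in the paper). -/
def Rfun : ℕ → ℕ → ℕ
  | 0, _ => 0
  | 1, _ => 0
  | 2, _ => 2
  | 3, _ => 3
  | 4, d => 2 * d + 1
  | _ + 5, 0 => 0
  | _ + 5, 1 => 0
  | s + 5, 2 => 2 ^ (s + 3) + 1
  | s + 5, d + 3 =>
      2 * (Rfun (s + 4) (d + 3) - 1) + (Rfun (s + 3) (d + 3) - 1) * (Rfun (s + 5) (d + 2) - 3) + 1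
  termination_by s d => (s, d)

/-- The hierarchy `D_s(d)`. -/
def Dfun : ℕ → ℕ → ℕ
  | 0, _ => 0
  | 1, _ => 0
  | 2, _ => 2
  | _ + 3, 0 => 0
  | _ + 3, 1 => 0
  | s + 3, 2 => 2 ^ (s + 2) + 2 ^ (s + 1) - 1
  | s + 3, d + 3 =>
      2 * Dfun (s + 2) (d + 3) + (Dfun (s + 1) (d + 3) + 1) * (Rfun (s + 3) (d + 2) - 3)
        + Dfun (s + 3) (d + 2) - Rfun (s + 3) (d + 2) + 1
  termination_by s d => (s, d)

/-- `β_s(m) = D_s(α(m))`. -/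
noncomputable def betaFun (s m : ℕ) : ℕ := Dfun s (invAck m)

/-! ## Sequences: MST and formations in sequences -/

/-- The list of column indices of the `1`-entries of a row, in increasing order. -/
def rowList {n : ℕ} (row : Fin n → Bool) : List (Fin n) :=
  (List.finRange n).filter (fun j => row j)

/-- The matrix → sequence transformation: read the rows top to bottom, writing for each
`1`-entry the index of its column. -/
def MST {m n : ℕ} (M : Fin m → Fin n → Bool) : List (Fin n) :=
  ((List.finRange m).map (fun i => rowList (M i))).flatten

/-- The list `L` contains an `(r,s)`-formation as a subsequence: a concatenation of `s`
permutations of the same `r`-element set of symbols is a sublist of `L`. -/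
def IsFormationSeq {A : Type*} [DecidableEq A] (r s : ℕ) (L : List A) : Prop :=
  ∃ (T : Finset A) (F : List (List A)), T.card = r ∧ F.length = s ∧
    (∀ l ∈ F, l.Nodup ∧ l.toFinset = T) ∧ List.Sublist F.flatten L

/-!
A matrix contains `DS_s` exactly if, for some pair of columns, their `1`-entries read downwards
alternate `s` times, starting in the right column. The columns of the matrix will be the symbols of
an array with distinct entries in each row, with a `1`-entry in the rows where the symbol occurs.

To get such an array of width `m` on level `k`, without alternations of length `2(t+1) + 3`, take
an array `X` of width `m - 1` on level `k`, an array `D` on level `k - 1` that has no alternations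
of length `2t + 3` and whose width is the number of rows of `X`, and an array `A` on level `k - 1`
whose width is the number of symbols of `D`. Replace every row of `A` by a copy of `D` written with
the symbols of that row, and spread each row of each copy over the rows of a separate copy of `X`,
as a new first column. An alternation between two symbols of the new column that share a row of `A`
has at most its first and last place outside the copy of `D` belonging to that row, and a new symbol
occurs at most once within a copy of `X`.

The numbers of occurrences of a symbol in `A` and in `D` multiply, so by Pascal's rule they equal
`2 ^ C(k, t+1)`, while the numbers of rows and symbols are bounded by the Ackermann hierarchy.
Hence size `n` allows `k = α(n) - O(1)`, and `C(k, t+1) = α(n)^(t+1) / (t+1)! - O(α(n)^t)`.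
Disjoint copies of the array fill up an `n × n` matrix.
-/

section Alternation

variable {T R S : Type*}

/-- `f` runs upwards alternately through `Q` and `P`, starting in `Q`. With `P` and `Q` the sets of
places where two symbols `a < b` occur, this is an alternation `b a b a …`. -/
structure IsAlternation [Preorder T] (P Q : Set T) {q : ℕ} (f : Fin q → T) : Prop where
  strictMono : StrictMono f
  mem_right : ∀ i, Even i.val → f i ∈ Q
  mem_left : ∀ i, Odd i.val → f i ∈ P

/-- The Davenport–Schinzel pattern `b a b a …` of length `q`, where `a` and `b` occupy the places
`P` and `Q` respectively. -/
def HasAlternation [Preorder T] (P Q : Set T) (q : ℕ) : Prop :=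
  ∃ f : Fin q → T, IsAlternation P Q f

lemma HasAlternation.of_le [Preorder T] {P Q : Set T} {p q : ℕ} (hpq : p ≤ q)
    (h : HasAlternation P Q q) : HasAlternation P Q p := by
  obtain ⟨f, hf⟩ := h
  exact ⟨f ∘ Fin.castLE hpq, hf.strictMono.comp (Fin.strictMono_castLE hpq),
    fun i hi => hf.mem_right _ hi, fun i hi => hf.mem_left _ hi⟩

lemma IsAlternation.map [Preorder T] [PartialOrder R] {P Q : Set T} {P' Q' : Set R} {q : ℕ}
    {f : Fin q → T} (hf : IsAlternation P Q f) {π : T → R} (hπ : Monotone π)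
    (hP : Set.MapsTo π P P') (hQ : Set.MapsTo π Q Q') (hd : Disjoint P' Q') :
    IsAlternation P' Q' (π ∘ f) := by
  refine ⟨fun i j hij => ?_, fun i hi => hQ (hf.mem_right i hi), fun i hi => hP (hf.mem_left i hi)⟩
  obtain ⟨k, hk⟩ : ∃ k : Fin q, k.val = i.val + 1 := ⟨⟨i + 1, by omega⟩, rfl⟩
  have hne : π (f i) ≠ π (f k) := by
    rcases Nat.even_or_odd i.val with hi | hi
    · exact (hd.ne_of_mem (hP (hf.mem_left k (hk ▸ hi.add_one))) (hQ (hf.mem_right i hi))).symm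
    · exact hd.ne_of_mem (hP (hf.mem_left i hi)) (hQ (hf.mem_right k (hk ▸ hi.add_one)))
  have hik : π (f i) ≤ π (f k) := hπ (hf.strictMono.monotone (by omega))
  exact (hik.lt_of_ne hne).trans_le (hπ (hf.strictMono.monotone (by omega)))

/-- Two symbols `a` and `b`, occurring in the rows `P` and `Q` respectively, share the row `ρ` and
otherwise follow the pattern `a … a b … b (ab) b … b a … a`. -/
structure CrossAt [Preorder R] (P Q : Set R) (ρ : R) : Prop where
  mem_left : ρ ∈ P
  mem_right : ρ ∈ Q
  le_left : ∀ p ∈ P, ∀ q ∈ Q, q ≤ p → ρ ≤ p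
  left_le : ∀ p ∈ P, ∀ q ∈ Q, p ≤ q → p ≤ ρ

lemma CrossAt.image [Preorder R] [Preorder S] {P Q : Set R} {ρ : R} (h : CrossAt P Q ρ)
    (e : R ↪o S) : CrossAt (e '' P) (e '' Q) (e ρ) where
  mem_left := Set.mem_image_of_mem e h.mem_left
  mem_right := Set.mem_image_of_mem e h.mem_right
  le_left := by
    rintro _ ⟨p, hp, rfl⟩ _ ⟨q, hq, rfl⟩ hqp
    exact e.monotone (h.le_left p hp q hq (e.le_iff_le.1 hqp))
  left_le := by
    rintro _ ⟨p, hp, rfl⟩ _ ⟨q, hq, rfl⟩ hpq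
    exact e.monotone (h.left_le p hp q hq (e.le_iff_le.1 hpq))

lemma CrossAt.apply_eq [Preorder T] [PartialOrder R] {P Q : Set T} {P' Q' : Set R} {ρ : R}
    (h : CrossAt P' Q' ρ) {π : T → R} (hπ : Monotone π) (hP : Set.MapsTo π P P')
    (hQ : Set.MapsTo π Q Q') {t : ℕ} {f : Fin (2 * t + 3) → T} (hf : IsAlternation P Q f)
    {i : Fin (2 * t + 3)} (hi : 0 < i.val) (hi' : i.val < 2 * t + 2) : π (f i) = ρ := by
  have hmono : Monotone (π ∘ f) := hπ.comp hf.strictMono.monotone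
  have key (k : Fin (2 * t + 3)) (hk : Odd k.val) : π (f k) = ρ := by
    obtain ⟨m, hm⟩ := hk
    have hkP : π (f k) ∈ P' := hP (hf.mem_left k ⟨m, hm⟩)
    have hpred := hQ (hf.mem_right ⟨2 * m, by omega⟩ (even_two_mul m))
    have hsucc := hQ (hf.mem_right ⟨2 * m + 2, by omega⟩ ⟨m + 1, by dsimp only; omega⟩)
    exact le_antisymm (h.left_le _ hkP _ hsucc (hmono (Fin.le_def.2 (by dsimp only; omega))))
      (h.le_left _ hkP _ hpred (hmono (Fin.le_def.2 (by dsimp only; omega))))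
  rcases Nat.even_or_odd' i.val with ⟨m, hm | hm⟩
  · have hpred := key ⟨2 * m - 1, by omega⟩ ⟨m - 1, by dsimp only; omega⟩
    have hsucc := key ⟨2 * m + 1, by omega⟩ ⟨m, rfl⟩
    exact le_antisymm (hsucc ▸ hmono (Fin.le_def.2 (by dsimp only; omega)))
      (hpred ▸ hmono (Fin.le_def.2 (by dsimp only; omega)))
  · exact key i ⟨m, hm⟩

/-- The interactions allowed between two symbols `a < b` occurring in the rows `P` and `Q`
respectively, on the way to excluding alternations of length `2 * t + 3`. -/
def Admissible [Preorder R] (t : ℕ) (P Q : Set R) : Prop :=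
  (Disjoint P Q ∧ ¬ HasAlternation P Q (2 * t + 3)) ∨ ∃ ρ, CrossAt P Q ρ

lemma Admissible.not_hasAlternation_of_injOn [Preorder T] [PartialOrder R] {P Q : Set T}
    {P' Q' : Set R} {t : ℕ} (h : Admissible (t + 1) P' Q') {π : T → R} (hπ : Monotone π)
    (hinj : Set.InjOn π P) (hP : Set.MapsTo π P P') (hQ : Set.MapsTo π Q Q') :
    ¬ HasAlternation P Q (2 * (t + 1) + 3) := by
  intro halt
  rcases h with ⟨hd, hno⟩ | ⟨ρ, hρ⟩
  · obtain ⟨f, hf⟩ := halt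
    exact hno ⟨_, hf.map hπ hP hQ hd⟩
  · obtain ⟨f, hf⟩ : HasAlternation P Q (2 * 1 + 3) := halt.of_le (by omega)
    have hfiber (i : Fin 5) (hi : 0 < i.val) (hi' : i.val < 4) : π (f i) = ρ :=
      hρ.apply_eq hπ hP hQ (t := 1) hf hi hi'
    have heq : f 1 = f 3 := hinj (hf.mem_left 1 (by decide)) (hf.mem_left 3 (by decide))
      ((hfiber 1 (by decide) (by decide)).trans (hfiber 3 (by decide) (by decide)).symm)
    exact (hf.strictMono (by decide : (1 : Fin 5) < 3)).ne heq

lemma Admissible.image [PartialOrder R] [PartialOrder S] {P Q : Set R} {t : ℕ}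
    (h : Admissible t P Q) (e : R ↪o S) : Admissible t (e '' P) (e '' Q) := by
  rcases h with ⟨hd, hno⟩ | ⟨ρ, hρ⟩
  · refine Or.inl ⟨(Set.disjoint_image_iff e.injective).2 hd, ?_⟩
    rintro ⟨f, hf⟩
    have hrange (i) : f i ∈ Set.range e := by
      rcases Nat.even_or_odd i.val with hi | hi
      · exact Set.image_subset_range e Q (hf.mem_right i hi)
      · exact Set.image_subset_range e P (hf.mem_left i hi)
    choose g hg using hrange
    obtain rfl : e ∘ g = f := funext hg
    exact hno ⟨g, fun i j hij => e.lt_iff_lt.1 (hf.strictMono hij),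
      fun i hi => e.injective.mem_set_image.1 (hf.mem_right i hi),
      fun i hi => e.injective.mem_set_image.1 (hf.mem_left i hi)⟩
  · exact Or.inr ⟨e ρ, hρ.image e⟩

lemma Admissible.of_forall_lt [Preorder R] {P Q : Set R} (t : ℕ)
    (h : ∀ p ∈ P, ∀ q ∈ Q, p < q) : Admissible t P Q := by
  refine Or.inl ⟨Set.disjoint_left.2 fun r hP hQ => (h r hP r hQ).false, fun halt => ?_⟩
  obtain ⟨f, hf⟩ : HasAlternation P Q 2 := halt.of_le (by omega)
  exact (h _ (hf.mem_left 1 (by decide)) _ (hf.mem_right 0 (by decide))).asymm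
    (hf.strictMono (by decide))

lemma Admissible.of_ordConnected [LinearOrder R] {P Q I : Set R} (t : ℕ) (hI : I.OrdConnected)
    (hQ : Q ⊆ I) (hP : (P ∩ I).Subsingleton) : Admissible (t + 1) P Q := by
  by_cases hd : Disjoint P Q
  · refine Or.inl ⟨hd, fun halt => ?_⟩
    obtain ⟨f, hf⟩ : HasAlternation P Q 5 := halt.of_le (by omega)
    have hQI (i : Fin 5) (hi : Even i.val) : f i ∈ I := hQ (hf.mem_right i hi)
    have hPI (i : Fin 5) (hi : Odd i.val) : f i ∈ P ∩ I :=
      ⟨hf.mem_left i hi, hI.out (hQI 0 (by decide)) (hQI 4 (by decide))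
        ⟨hf.strictMono.monotone (Fin.zero_le i), hf.strictMono.monotone (Fin.le_last i)⟩⟩
    exact (hf.strictMono (by decide : (1 : Fin 5) < 3)).ne
      (hP (hPI 1 (by decide)) (hPI 3 (by decide)))
  · obtain ⟨ρ, hρP, hρQ⟩ := Set.not_disjoint_iff.1 hd
    refine Or.inr ⟨ρ, hρP, hρQ, fun p hp q hq hqp => ?_, fun p hp q hq hpq => ?_⟩
    · by_contra! hpρ
      have hpI : p ∈ I := hI.out (hQ hq) (hQ hρQ) ⟨hqp, hpρ.le⟩
      exact hpρ.ne (hP ⟨hp, hpI⟩ ⟨hρP, hQ hρQ⟩)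
    · by_contra! hρp
      have hpI : p ∈ I := hI.out (hQ hρQ) (hQ hq) ⟨hρp.le, hpq⟩
      exact hρp.ne (hP ⟨hρP, hQ hρQ⟩ ⟨hp, hpI⟩)

lemma matContains_DS_iff {m n s : ℕ} (M : Fin m → Fin n → Bool) :
    MatContains M (DS s) ↔
      ∃ a b, a < b ∧ HasAlternation {i | M i a = true} {i | M i b = true} s := by
  constructor
  · rintro ⟨r, c, hr, hc, hM⟩
    refine ⟨c 0, c 1, hc (by decide), r, hr, fun i hi => hM i 1 ?_, fun i hi => hM i 0 ?_⟩
    · simpa [DS] using Nat.odd_iff.1 hi.add_one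
    · simpa [DS] using Nat.odd_iff.1 hi
  · rintro ⟨a, b, hab, r, hr⟩
    refine ⟨r, ![a, b], hr.strictMono, by simpa using hab, fun i j hij => ?_⟩
    fin_cases j
    · exact hr.mem_left i (Nat.odd_iff.2 (by simpa [DS] using hij))
    · exact hr.mem_right i (by simpa [DS, ← Nat.odd_iff, Nat.odd_add_one] using hij)

end Alternation

section Arrays

variable {R R' J C C' : Type*}

/-- The places of the array `X` that hold the symbol `c`. They are ordered row by row, as in the
sequence obtained by writing the rows of `X` one after the other. -/
def occurrences (X : R → J → C) (c : C) : Set (R ×ₗ J) :=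
  {p | X (ofLex p).1 (ofLex p).2 = c}

/-- The rows of the array `X` in which the symbol `c` occurs. -/
def rowsOf (X : R → J → C) (c : C) : Set R :=
  {r | c ∈ Set.range (X r)}

/-- An array of distinct symbols in each row, each symbol occurring `μ` times, such that the rows
written one after the other contain no alternation `b a b a …` of length `2 * t + 3` with
`a < b`. -/
structure IsDSFreeArray [Preorder R] [Preorder J] [Preorder C] (t μ : ℕ)
    (X : R → J → C) : Prop where
  injective : ∀ r, Function.Injective (X r)
  ncard_occurrences : ∀ c, (occurrences X c).ncard = μ
  not_hasAlternation : ∀ a b, a < b →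
    ¬ HasAlternation (occurrences X a) (occurrences X b) (2 * t + 3)

/-- An array with increasing rows, each symbol occurring in `μ` rows, in which any two symbols
interact as described by `Admissible t`. -/
structure IsAdmissibleArray [Preorder R] [Preorder J] [Preorder C] (t μ : ℕ)
    (X : R → J → C) : Prop where
  strictMono : ∀ r, StrictMono (X r)
  ncard_rowsOf : ∀ c, (rowsOf X c).ncard = μ
  admissible : ∀ a b, a < b → Admissible t (rowsOf X a) (rowsOf X b)

lemma image_fst_occurrences (X : R → J → C) (c : C) :
    (fun p => (ofLex p).1) '' occurrences X c = rowsOf X c := by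
  ext r
  constructor
  · rintro ⟨p, hp, rfl⟩
    exact ⟨_, hp⟩
  · rintro ⟨j, hj⟩
    exact ⟨toLex (r, j), hj, rfl⟩

lemma injOn_fst_occurrences {X : R → J → C} (hX : ∀ r, Function.Injective (X r)) (c : C) :
    Set.InjOn (fun p => (ofLex p).1) (occurrences X c) := by
  rintro p hp q hq (hpq : (ofLex p).1 = (ofLex q).1)
  have hp' : X (ofLex p).1 (ofLex p).2 = c := hp
  exact ofLex.injective (Prod.ext hpq (hX _ (hp'.trans (hpq ▸ hq.symm))))

lemma ncard_occurrences {X : R → J → C} (hX : ∀ r, Function.Injective (X r)) (c : C) :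
    (occurrences X c).ncard = (rowsOf X c).ncard := by
  rw [← image_fst_occurrences, (injOn_fst_occurrences hX c).ncard_image]

lemma rowsOf_congr [LE R] [LE R'] [LE C] [LE C'] (X : R → J → C) (φ : R ≃o R') (ψ : C ≃o C')
    (c : C') : rowsOf (fun r j => ψ (X (φ.symm r) j)) c = φ '' rowsOf X (ψ.symm c) := by
  ext r
  rw [φ.image_eq_preimage_symm]
  exact exists_congr fun _ => ψ.toEquiv.eq_symm_apply.symm

variable [LinearOrder R] [LinearOrder R'] [LinearOrder J] [LinearOrder C] [LinearOrder C']
  {t μ : ℕ} {X : R → J → C}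

lemma IsAdmissibleArray.isDSFreeArray (h : IsAdmissibleArray (t + 1) μ X) :
    IsDSFreeArray (t + 1) μ X where
  injective r := (h.strictMono r).injective
  ncard_occurrences c :=
    (ncard_occurrences (fun r => (h.strictMono r).injective) c).trans (h.ncard_rowsOf c)
  not_hasAlternation a b hab :=
    (h.admissible a b hab).not_hasAlternation_of_injOn Prod.Lex.monotone_fst_ofLex
      (injOn_fst_occurrences (fun r => (h.strictMono r).injective) a)
      (fun p hp => ⟨(ofLex p).2, hp⟩) (fun p hp => ⟨(ofLex p).2, hp⟩)

lemma IsAdmissibleArray.congr (h : IsAdmissibleArray t μ X) (φ : R ≃o R') (ψ : C ≃o C') :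
    IsAdmissibleArray t μ (fun r j => ψ (X (φ.symm r) j)) where
  strictMono r := ψ.strictMono.comp (h.strictMono _)
  ncard_rowsOf c := by
    rw [rowsOf_congr, Set.ncard_image_of_injective _ φ.injective]
    exact h.ncard_rowsOf _
  admissible a b hab := by
    rw [rowsOf_congr, rowsOf_congr]
    exact (h.admissible _ _ (ψ.symm.strictMono hab)).image φ.toOrderEmbedding

lemma IsDSFreeArray.map (h : IsDSFreeArray t μ X) (ψ : C ≃o C') :
    IsDSFreeArray t μ (fun r j => ψ (X r j)) := by
  have hocc (c : C') : occurrences (fun r j => ψ (X r j)) c = occurrences X (ψ.symm c) :=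
    Set.ext fun _ => (ψ.toEquiv.eq_symm_apply).symm
  exact ⟨fun r => ψ.injective.comp (h.injective r),
    fun c => hocc c ▸ h.ncard_occurrences _,
    fun a b hab => hocc a ▸ hocc b ▸ h.not_hasAlternation _ _ (ψ.symm.strictMono hab)⟩

end Arrays

section Constructions

variable {R J C D U : Type*}

/-- One copy of the array `X` for every `u : U`, using pairwise different symbols. The copies are
stacked, and their symbols ordered, according to the order of `U`. -/
def copies (U : Type*) (X : R → J → C) : U ×ₗ R → J → U ×ₗ C :=
  fun r j => toLex ((ofLex r).1, X (ofLex r).2 j)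

lemma rowsOf_copies (X : R → J → C) (u : U) (c : C) :
    rowsOf (copies U X) (toLex (u, c)) = (fun r => toLex (u, r)) '' rowsOf X c := by
  ext r
  constructor
  · rintro ⟨j, hj⟩
    have hj' := Prod.ext_iff.1 (toLex.injective hj)
    exact ⟨(ofLex r).2, ⟨j, hj'.2⟩, ofLex.injective (Prod.ext hj'.1.symm rfl)⟩
  · rintro ⟨r, ⟨j, rfl⟩, rfl⟩
    exact ⟨j, rfl⟩

protected lemma IsAdmissibleArray.copies [LinearOrder R] [LinearOrder J] [LinearOrder C]
    [LinearOrder U] {t μ : ℕ} {X : R → J → C} (h : IsAdmissibleArray t μ X) :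
    IsAdmissibleArray t μ (copies U X) where
  strictMono r i j hij := Prod.Lex.toLex_lt_toLex.2 (Or.inr ⟨rfl, h.strictMono _ hij⟩)
  ncard_rowsOf c := by
    have hinj : Function.Injective fun r : R => toLex ((ofLex c).1, r) :=
      fun r s hrs => congrArg (fun p => (ofLex p).2) hrs
    have hrows := rowsOf_copies X (ofLex c).1 (ofLex c).2
    exact hrows ▸ (Set.ncard_image_of_injective _ hinj).trans (h.ncard_rowsOf _)
  admissible := by
    rintro a b hab
    rw [← toLex_ofLex a, ← toLex_ofLex b, ← Prod.mk.eta (p := ofLex a),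
      ← Prod.mk.eta (p := ofLex b), rowsOf_copies, rowsOf_copies]
    rcases Prod.Lex.lt_iff.1 hab with huv | ⟨huv, hlt⟩
    · refine Admissible.of_forall_lt t ?_
      rintro _ ⟨p, -, rfl⟩ _ ⟨q, -, rfl⟩
      exact Prod.Lex.toLex_lt_toLex.2 (Or.inl huv)
    · have hmono : StrictMono fun r : R => toLex ((ofLex b).1, r) :=
        fun r s hrs => Prod.Lex.toLex_lt_toLex.2 (Or.inr ⟨rfl, hrs⟩)
      rw [huv]
      exact (h.admissible _ _ hlt).image (OrderEmbedding.ofStrictMono _ hmono)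

/-- The array `X` with the new first column `y`, whose symbols precede those of `X`. -/
def prepend {m : ℕ} (y : R → C) (X : R → Fin m → D) : R → Fin (m + 1) → C ⊕ₗ D :=
  fun r => Fin.cons (Sum.inlₗ (y r)) (Sum.inrₗ ∘ X r)

lemma rowsOf_prepend_inl {m : ℕ} (y : R → C) (X : R → Fin m → D) (a : C) :
    rowsOf (prepend y X) (Sum.inlₗ a) = y ⁻¹' {a} := by
  ext r
  simp [rowsOf, prepend, Fin.range_cons, eq_comm]

lemma rowsOf_prepend_inr {m : ℕ} (y : R → C) (X : R → Fin m → D) (c : D) :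
    rowsOf (prepend y X) (Sum.inrₗ c) = rowsOf X c := by
  ext r
  simp [rowsOf, prepend, Fin.range_cons]

protected lemma IsAdmissibleArray.prepend [Preorder R] [Preorder C] [Preorder D] {m t μ : ℕ}
    {y : R → C} {X : R → Fin m → D} (h : IsAdmissibleArray t μ X)
    (hcard : ∀ a, (y ⁻¹' {a}).ncard = μ)
    (hleft : ∀ a b, a < b → Admissible t (y ⁻¹' {a}) (y ⁻¹' {b}))
    (hright : ∀ a c, Admissible t (y ⁻¹' {a}) (rowsOf X c)) :
    IsAdmissibleArray t μ (prepend y X) where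
  strictMono r := Fin.strictMono_cons.2
    ⟨fun j => Sum.Lex.inl_lt_inr _ _, fun i j hij => Sum.Lex.inr_lt_inr_iff.2 (h.strictMono r hij)⟩
  ncard_rowsOf := by
    rintro (a | c)
    · exact (congrArg Set.ncard (rowsOf_prepend_inl y X a)).trans (hcard a)
    · exact (congrArg Set.ncard (rowsOf_prepend_inr y X c)).trans (h.ncard_rowsOf c)
  admissible := by
    rintro (a | a) (b | b) hab
    · exact (rowsOf_prepend_inl y X a).symm ▸ (rowsOf_prepend_inl y X b).symm ▸
        hleft a b (Sum.Lex.inl_lt_inl_iff.1 hab)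
    · exact (rowsOf_prepend_inl y X a).symm ▸ (rowsOf_prepend_inr y X b).symm ▸ hright a b
    · exact (Sum.Lex.not_inr_lt_inl hab).elim
    · exact (rowsOf_prepend_inr y X a).symm ▸ (rowsOf_prepend_inr y X b).symm ▸
        h.admissible a b (Sum.Lex.inr_lt_inr_iff.1 hab)

end Constructions

section Substitution

variable {R R' S J C : Type*}

/-- The column obtained from `A` by replacing each of its rows by a copy of the array `D`, each
symbol `j` of `D` standing for the `j`-th entry of the row. The symbols of `D` are the positions
in the rows of `A` in reversed order. -/
def substitute (A : R → J → C) (D : R' → S → Jᵒᵈ) : (R ×ₗ R') ×ₗ S → C :=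
  fun r => A (ofLex (ofLex r).1).1 (OrderDual.ofDual (D (ofLex (ofLex r).1).2 (ofLex r).2))

lemma subsingleton_preimage_substitute {A : R → J → C} {D : R' → S → Jᵒᵈ}
    (hA : ∀ r, Function.Injective (A r)) (hD : ∀ r, Function.Injective (D r)) (u : R ×ₗ R')
    (c : C) :
    (substitute A D ⁻¹' {c} ∩ (fun r => (ofLex r).1) ⁻¹' {u}).Subsingleton := by
  rintro r ⟨hrc, rfl⟩ s ⟨hsc, hsr : (ofLex s).1 = (ofLex r).1⟩
  have hcol : substitute A D r = substitute A D s := Eq.trans hrc (Eq.symm hsc)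
  rw [substitute, substitute, hsr] at hcol
  exact ofLex.injective (Prod.ext hsr.symm (hD _ (OrderDual.ofDual.injective (hA _ hcol))))

lemma ncard_preimage_substitute [Finite R] [Finite R'] [Finite S] [Finite J] {A : R → J → C}
    {D : R' → S → Jᵒᵈ} {c : C} {μ ν : ℕ} (hA : (occurrences A c).ncard = μ)
    (hD : ∀ j, (occurrences D j).ncard = ν) : (substitute A D ⁻¹' {c}).ncard = μ * ν := by
  let e : substitute A D ⁻¹' {c} ≃
      Σ p : occurrences A c, occurrences D (OrderDual.toDual (ofLex p.1).2) :=
    { toFun := fun ⟨r, hr⟩ =>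
        ⟨⟨toLex ((ofLex (ofLex r).1).1,
          OrderDual.ofDual (D (ofLex (ofLex r).1).2 (ofLex r).2)), hr⟩,
          toLex ((ofLex (ofLex r).1).2, (ofLex r).2), rfl⟩
      invFun := fun ⟨⟨p, hp⟩, ⟨q, hq⟩⟩ =>
        ⟨toLex (toLex ((ofLex p).1, (ofLex q).1), (ofLex q).2),
          (congrArg (fun j => A (ofLex p).1 (OrderDual.ofDual j)) hq).trans hp⟩
      left_inv := fun _ => rfl
      right_inv := by
        rintro ⟨⟨⟨r, j⟩, hp⟩, ⟨q, hq⟩⟩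
        obtain rfl : OrderDual.ofDual (D (ofLex q).1 (ofLex q).2) = j := hq
        rfl }
  have : Finite (R ×ₗ J) := inferInstanceAs (Finite (R × J))
  have : Finite (R' ×ₗ S) := inferInstanceAs (Finite (R' × S))
  have : Fintype (occurrences A c) := Fintype.ofFinite _
  calc (substitute A D ⁻¹' {c}).ncard
      = ∑ p : occurrences A c, (occurrences D (OrderDual.toDual (ofLex p.1).2)).ncard :=
        (Nat.card_congr e).trans Nat.card_sigma
    _ = μ * ν := by
        rw [Finset.sum_congr rfl fun p _ => hD _, Finset.sum_const, Finset.card_univ,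
          Set.fintypeCard_eq_ncard, hA, smul_eq_mul]

lemma toLex_snd_lt_of_lt [PartialOrder R] [PartialOrder R'] [PartialOrder S] {x y : (R ×ₗ R') ×ₗ S}
    (hxy : (ofLex (ofLex x).1).1 = (ofLex (ofLex y).1).1) (h : x < y) :
    toLex ((ofLex (ofLex x).1).2, (ofLex x).2) < toLex ((ofLex (ofLex y).1).2, (ofLex y).2) := by
  rcases Prod.Lex.lt_iff.1 h with hlt | ⟨heq, hlt⟩
  · rcases Prod.Lex.lt_iff.1 hlt with hlt | ⟨-, hlt⟩
    · exact (hlt.ne hxy).elim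
    · exact Prod.Lex.toLex_lt_toLex.2 (Or.inl hlt)
  · exact Prod.Lex.toLex_lt_toLex.2 (Or.inr ⟨congrArg (fun u => (ofLex u).2) heq, hlt⟩)

lemma admissible_preimage_substitute [LinearOrder R] [LinearOrder R'] [LinearOrder S]
    [LinearOrder J] [LinearOrder C] {A : R → J → C} {D : R' → S → Jᵒᵈ} {t μ ν : ℕ}
    (hA : IsAdmissibleArray (t + 1) μ A) (hD : IsDSFreeArray t ν D) {a b : C} (hab : a < b) :
    Admissible (t + 1) (substitute A D ⁻¹' {a}) (substitute A D ⁻¹' {b}) := by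
  refine Or.inl ⟨Disjoint.preimage _ (Set.disjoint_singleton.2 hab.ne), fun ⟨f, hf⟩ => ?_⟩
  have hπ : Monotone fun r : (R ×ₗ R') ×ₗ S => (ofLex (ofLex r).1).1 :=
    Prod.Lex.monotone_fst_ofLex.comp Prod.Lex.monotone_fst_ofLex
  have hmaps (c : C) : Set.MapsTo (fun r : (R ×ₗ R') ×ₗ S => (ofLex (ofLex r).1).1)
      (substitute A D ⁻¹' {c}) (rowsOf A c) := fun r hr => ⟨_, hr⟩
  rcases hA.admissible a b hab with ⟨hd, hno⟩ | ⟨ρ, hρ⟩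
  · exact hno ⟨_, hf.map hπ (hmaps a) (hmaps b) hd⟩
  · obtain ⟨i, rfl⟩ := hρ.mem_left
    obtain ⟨j, rfl⟩ := hρ.mem_right
    -- All places but the first and the last lie in row `ρ` of `A`. Dropping these two shifts the
    -- alternation to `a b a …`, which is why the order of the symbols of `D` has to be reversed.
    let inner (k : Fin (2 * t + 3)) : R' ×ₗ S :=
      toLex ((ofLex (ofLex (f k.succ.castSucc)).1).2, (ofLex (f k.succ.castSucc)).2)
    have hfiber (k : Fin (2 * t + 3)) : (ofLex (ofLex (f k.succ.castSucc)).1).1 = ρ :=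
      hρ.apply_eq hπ (hmaps _) (hmaps _) hf (by simp) (by simp; omega)
    have hji := OrderDual.toDual_lt_toDual.2 ((hA.strictMono ρ).lt_iff_lt.1 hab)
    have hmem {k : Fin (2 * t + 3)} {l : J} (hk : f k.succ.castSucc ∈ substitute A D ⁻¹' {A ρ l}) :
        inner k ∈ occurrences D (OrderDual.toDual l) := by
      rw [Set.mem_preimage, Set.mem_singleton_iff, substitute, hfiber] at hk
      exact OrderDual.ofDual.injective ((hA.strictMono ρ).injective hk)
    refine hD.not_hasAlternation _ _ hji ⟨inner, fun k l hkl => ?_,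
      fun k hk => hmem (hf.mem_left _ hk.add_one), fun k hk => hmem (hf.mem_right _ hk.add_one)⟩
    have hlt := hf.strictMono (Fin.castSucc_lt_castSucc_iff.2 (Fin.succ_lt_succ_iff.2 hkl))
    exact toLex_snd_lt_of_lt ((hfiber k).trans (hfiber l).symm) hlt

lemma IsAdmissibleArray.prepend_substitute {E : Type*} [LinearOrder R] [LinearOrder R']
    [LinearOrder S] [LinearOrder J] [LinearOrder C] [LinearOrder E] [Finite R] [Finite R']
    [Finite S] [Finite J] {A : R → J → C} {D : R' → S → Jᵒᵈ} {t m μ ν : ℕ} {X : S → Fin m → E}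
    (hA : IsAdmissibleArray (t + 1) μ A) (hD : IsDSFreeArray t ν D)
    (hX : IsAdmissibleArray (t + 1) (μ * ν) X) :
    IsAdmissibleArray (t + 1) (μ * ν) (prepend (substitute A D) (copies (R ×ₗ R') X)) := by
  refine hX.copies.prepend
    (fun c => ncard_preimage_substitute (hA.isDSFreeArray.ncard_occurrences c) hD.ncard_occurrences)
    (fun _ _ => admissible_preimage_substitute hA hD) fun a c => ?_
  refine .of_ordConnected t
    (Set.ordConnected_singleton.preimage_mono Prod.Lex.monotone_fst_ofLex) ?_
    (subsingleton_preimage_substitute (fun r => (hA.strictMono r).injective) hD.injective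
      (ofLex c).1 a)
  rintro r ⟨j, rfl⟩
  rfl

lemma IsAdmissibleArray.exists_fin [LinearOrder R] [LinearOrder J] [LinearOrder C] [Fintype R]
    [Fintype C] {t μ F N : ℕ} {X : R → J → C} (h : IsAdmissibleArray t μ X)
    (hF : Fintype.card R = F) (hN : Fintype.card C = N) :
    ∃ Y : Fin F → J → Fin N, IsAdmissibleArray t μ Y :=
  ⟨_, h.congr (Fintype.orderIsoFinOfCardEq R hF).symm (Fintype.orderIsoFinOfCardEq C hN).symm⟩

lemma IsAdmissibleArray.exists_prepend_substitute {t μ ν m F₁ F₂ F₃ N₁ N₂ N₃ : ℕ}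
    {A : Fin F₁ → Fin N₂ → Fin N₁} {D : Fin F₂ → Fin F₃ → Fin N₂} {X : Fin F₃ → Fin m → Fin N₃}
    (hA : IsAdmissibleArray (t + 1) μ A) (hD : IsDSFreeArray t ν D)
    (hX : IsAdmissibleArray (t + 1) (μ * ν) X) :
    ∃ Y : Fin (F₁ * F₂ * F₃) → Fin (m + 1) → Fin (N₁ + F₁ * F₂ * N₃),
      IsAdmissibleArray (t + 1) (μ * ν) Y :=
  (hA.prepend_substitute (hD.map Fin.revOrderIso.symm) hX).exists_fin (by simp) (by simp)

end Substitution

section BaseCases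

lemma isAdmissibleArray_id {C : Type*} [LinearOrder C] (t : ℕ) :
    IsAdmissibleArray t 1 (fun (_ : Fin 1) (c : C) => c) where
  strictMono _ := strictMono_id
  ncard_rowsOf c := by simp [rowsOf]
  admissible a b _ := Or.inr ⟨0, ⟨a, rfl⟩, ⟨b, rfl⟩, fun p _ _ _ _ => Fin.zero_le p,
    fun p _ _ _ _ => (Fin.fin_one_eq_zero p).le⟩

lemma isAdmissibleArray_of_isEmpty {R J C : Type*} [LinearOrder R] [LinearOrder J] [LinearOrder C]
    [IsEmpty J] [IsEmpty C] (t μ : ℕ) (X : R → J → C) : IsAdmissibleArray t μ X where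
  strictMono _ := Subsingleton.strictMono _
  ncard_rowsOf := isEmptyElim
  admissible := isEmptyElim

lemma mem_occurrences_id_rev {m : ℕ} {c : Fin m} {p : Fin 2 ×ₗ Fin m} :
    p ∈ occurrences ![id, Fin.rev] c ↔ p = toLex (0, c) ∨ p = toLex (1, c.rev) := by
  induction p using Lex.rec with | h p
  obtain ⟨r, j⟩ := p
  fin_cases r <;> simp [occurrences, Fin.rev_eq_iff]

lemma isDSFreeArray_id_rev (m : ℕ) :
    IsDSFreeArray 0 2 (![id, Fin.rev] : Fin 2 → Fin m → Fin m) where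
  injective r := by
    fin_cases r
    exacts [Function.injective_id, Fin.rev_injective]
  ncard_occurrences c := by
    rw [Set.ext fun _ => mem_occurrences_id_rev]
    exact Set.ncard_pair (by simp)
  not_hasAlternation a b hab := by
    rintro ⟨f, hf⟩
    have h₀₁ : f 0 < f 1 := hf.strictMono (by decide)
    have h₁₂ : f 1 < f 2 := hf.strictMono (by decide)
    rcases mem_occurrences_id_rev.1 (hf.mem_left 1 (by decide)) with h₁ | h₁
    · rcases mem_occurrences_id_rev.1 (hf.mem_right 0 (by decide)) with h₀ | h₀ <;>
        simp [h₀, h₁, Prod.Lex.toLex_lt_toLex, hab.not_gt] at h₀₁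
    · rcases mem_occurrences_id_rev.1 (hf.mem_right 2 (by decide)) with h₂ | h₂ <;>
        simp [h₁, h₂, Prod.Lex.toLex_lt_toLex, hab.not_gt] at h₁₂

end BaseCases

section Ackermann

/-- The Ackermann hierarchy whose `d`-th level is inverse to `alphaHier (d + 1)`, in the sense of
`gc_alphaHier_ackHier`. -/
def ackHier : ℕ → ℕ → ℕ
  | 0, j => 2 * j
  | d + 1, j => (ackHier d)^[j] 1

lemma lt_iterate_one {g : ℕ → ℕ} (hg : ∀ j, 1 ≤ j → j < g j) (j : ℕ) : j < g^[j] 1 := by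
  induction j with
  | zero => exact Nat.one_pos
  | succ j ih =>
    rw [Function.iterate_succ_apply']
    exact lt_of_le_of_lt ih (hg _ (by omega))

lemma lt_ackHier (d : ℕ) {j : ℕ} (hj : 1 ≤ j) : j < ackHier d j := by
  induction d generalizing j with
  | zero => simp only [ackHier]; omega
  | succ d ih => exact lt_iterate_one (fun _ => ih) j

lemma iterCount_le_iff {f g : ℕ → ℕ} (hfg : GaloisConnection f g) (hg : ∀ j, 1 ≤ j → j < g j)
    {k m j : ℕ} (hk : m ≤ k) : iterCount f k m ≤ j ↔ m ≤ g^[j] 1 := by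
  induction k generalizing m j with
  | zero => simp [iterCount, Nat.le_zero.1 hk]
  | succ k ih =>
    have hone : 1 ≤ g^[j] 1 := Nat.one_le_of_lt (lt_iterate_one hg j)
    rw [iterCount]
    split_ifs with hm
    · exact iff_of_true j.zero_le (hm.trans hone)
    · have hfm : f m ≤ k :=
        (hfg m (m - 1)).2 (Nat.le_of_pred_lt (hg (m - 1) (by omega))) |>.trans (by omega)
      cases j with
      | zero => simpa using hm
      | succ j =>
        rw [Function.iterate_succ_apply', ← hfg m (g^[j] 1), ← ih hfm]
        omega

lemma gc_alphaHier_ackHier (d : ℕ) : GaloisConnection (alphaHier (d + 1)) (ackHier d) := by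
  induction d with
  | zero =>
    intro m j
    simp only [alphaHier, ackHier]
    omega
  | succ d ih => exact fun _ _ => iterCount_le_iff ih (fun _ => lt_ackHier d) le_rfl

lemma ackHier_three_lt_of_lt_invAck {d n : ℕ} (h : d + 1 < invAck n) : ackHier d 3 < n := by
  by_contra! hn
  exact h.not_ge (Nat.sInf_le ⟨d.succ_pos, (gc_alphaHier_ackHier d n 3).2 hn⟩)

lemma ackHier_monotone (d : ℕ) : Monotone (ackHier d) :=
  (gc_alphaHier_ackHier d).monotone_u

lemma ackHier_succ_succ (d j : ℕ) :
    ackHier (d + 1) (j + 1) = ackHier d (ackHier (d + 1) j) :=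
  Function.iterate_succ_apply' ..

lemma ackHier_one_left (j : ℕ) : ackHier 1 j = 2 ^ j := by
  induction j with
  | zero => rfl
  | succ j ih => rw [ackHier_succ_succ, ih, ackHier, pow_succ']

lemma ackHier_monotone_left : Monotone ackHier := by
  refine monotone_nat_of_le_succ fun d => ?_
  induction d with
  | zero =>
    intro j
    rw [ackHier_one_left, ackHier]
    exact Nat.mul_le_pow one_lt_two.ne' j
  | succ d ih => exact fun j => (ackHier_monotone d).iterate_le_of_le ih j 1

lemma two_pow_le_ackHier (d j : ℕ) : 2 ^ j ≤ ackHier (d + 1) j :=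
  ackHier_one_left j ▸ ackHier_monotone_left (by omega : 1 ≤ d + 1) j

lemma ackHier_one_right (d : ℕ) : ackHier d 1 = 2 := by
  induction d with
  | zero => rfl
  | succ _ ih => exact ih

lemma ackHier_two_right (d : ℕ) : ackHier d 2 = 4 := by
  induction d with
  | zero => rfl
  | succ d ih => rw [ackHier_succ_succ, ackHier_one_right, ih]

lemma ackHier_succ_three (d : ℕ) : ackHier (d + 1) 3 = ackHier d 4 := by
  rw [ackHier_succ_succ, ackHier_two_right]

lemma ackHier_succ_four (d : ℕ) : ackHier (d + 1) 4 = ackHier d (ackHier d 4) := by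
  rw [ackHier_succ_succ, ackHier_succ_three]

lemma two_pow_le_ackHier_four (d : ℕ) : 2 ^ (d + 4) ≤ ackHier (d + 1) 4 := by
  induction d with
  | zero => exact (ackHier_one_left 4).ge
  | succ d ih =>
    calc 2 ^ (d + 5) = 2 * 2 ^ (d + 4) := pow_succ' ..
      _ ≤ 2 * ackHier (d + 1) 4 := by gcongr
      _ ≤ ackHier (d + 1) (ackHier (d + 1) 4) := ackHier_monotone_left (d + 1).zero_le _
      _ = ackHier (d + 2) 4 := (ackHier_succ_four _).symm

lemma ackHier_two_pow_le (d j : ℕ) : ackHier (d + 1) (2 ^ j) ≤ ackHier (d + 2) (j + 1) :=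
  calc ackHier (d + 1) (2 ^ j) ≤ ackHier (d + 1) (ackHier (d + 2) j) :=
        ackHier_monotone _ (two_pow_le_ackHier _ j)
    _ = ackHier (d + 2) (j + 1) := (ackHier_succ_succ _ _).symm

lemma ackHier_two_pow_two_pow_le (d : ℕ) :
    ackHier (d + 1) (2 ^ 2 ^ (d + 4)) ≤ ackHier (d + 4) 3 :=
  calc ackHier (d + 1) (2 ^ 2 ^ (d + 4)) ≤ ackHier (d + 2) (2 ^ (d + 4) + 1) :=
        ackHier_two_pow_le d _
    _ ≤ ackHier (d + 2) (ackHier (d + 2) 4) :=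
        ackHier_monotone _ ((Nat.pow_lt_pow_succ one_lt_two).trans_le (two_pow_le_ackHier_four _))
    _ = ackHier (d + 4) 3 := by
      rw [ackHier_succ_three (d + 3), ackHier_succ_four (d + 2)]

end Ackermann

section Existence

/-- A bound for the numbers of rows and of symbols of the arrays of width `m` that are constructed
on level `k` of the recursion. The factor `6` leaves room for six applications of
`ackHier k` in the step from `m` to `m + 1` on level `k`. -/
def arraySize (k m : ℕ) : ℕ := ackHier (k + 1) (6 * (m + 1))

lemma lt_arraySize (k m : ℕ) : 6 * (m + 1) < arraySize k m :=
  lt_ackHier _ (by omega)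

lemma six_mul_add_one_le_two_pow {x : ℕ} (hx : 6 ≤ x) : 6 * (x + 1) ≤ 2 ^ x := by
  induction x, hx using Nat.le_induction with
  | base => norm_num
  | succ x hx ih => rw [pow_succ]; omega

lemma add_pow_three_le_two_pow_two_pow {x : ℕ} (hx : 6 ≤ x) : x + x ^ 3 ≤ 2 ^ 2 ^ x :=
  calc x + x ^ 3 ≤ x ^ 3 + x ^ 3 := by gcongr; exact Nat.le_self_pow three_ne_zero x
    _ ≤ x ^ 4 := by nlinarith [Nat.zero_le (x ^ 3)]
    _ ≤ (2 ^ x) ^ 4 := by gcongr; exact Nat.lt_two_pow_self.le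
    _ = 2 ^ (x * 4) := (pow_mul ..).symm
    _ ≤ 2 ^ 2 ^ x := Nat.pow_le_pow_right two_pos (by linarith [six_mul_add_one_le_two_pow hx])

lemma arraySize_le {k m x : ℕ} (hx : 6 ≤ x) (hm : m ≤ x) :
    arraySize k m ≤ (ackHier (k + 1))^[2] x := by
  have h : 6 * (m + 1) ≤ 2 ^ x := le_trans (by omega) (six_mul_add_one_le_two_pow hx)
  exact ackHier_monotone _ (h.trans (two_pow_le_ackHier k x))

lemma arraySize_succ_succ (k m : ℕ) :
    arraySize (k + 1) (m + 1) = (ackHier (k + 1))^[6] (arraySize (k + 1) m) := by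
  rw [arraySize, arraySize, ackHier, ackHier, ← Function.iterate_add_apply]
  congr 1
  ring_nf

lemma id_le_ackHier (d : ℕ) : id ≤ ackHier (d + 1) :=
  fun j => Nat.lt_two_pow_self.le.trans (two_pow_le_ackHier d j)

lemma add_pow_three_le_arraySize (k m : ℕ) :
    (ackHier (k + 1))^[4] (arraySize (k + 1) m) + (ackHier (k + 1))^[4] (arraySize (k + 1) m) ^ 3 ≤
      arraySize (k + 1) (m + 1) := by
  set g := ackHier (k + 1)
  set z := g^[4] (arraySize (k + 1) m)
  have hz : 6 ≤ z := by
    have hlt : 6 * (m + 1) < arraySize (k + 1) m := lt_arraySize _ _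
    exact (show 6 ≤ arraySize (k + 1) m by omega).trans
      (Function.id_le_iterate_of_id_le (id_le_ackHier k) 4 _)
  calc z + z ^ 3 ≤ 2 ^ 2 ^ z := add_pow_three_le_two_pow_two_pow hz
    _ ≤ 2 ^ g z := Nat.pow_le_pow_right two_pos (two_pow_le_ackHier k _)
    _ ≤ g (g z) := two_pow_le_ackHier k _
    _ = arraySize (k + 1) (m + 1) := (arraySize_succ_succ k m).symm

lemma add_mul_le_arraySize {k m F₁ F₂ F₃ N₁ N₂ N₃ : ℕ} (hF₃ : F₃ ≤ arraySize (k + 1) m)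
    (hN₃ : N₃ ≤ arraySize (k + 1) m) (hF₂ : F₂ ≤ arraySize k F₃) (hN₂ : N₂ ≤ arraySize k F₃)
    (hF₁ : F₁ ≤ arraySize k N₂) (hN₁ : N₁ ≤ arraySize k N₂) :
    F₁ * F₂ * F₃ ≤ arraySize (k + 1) (m + 1) ∧
      N₁ + F₁ * F₂ * N₃ ≤ arraySize (k + 1) (m + 1) := by
  set g := ackHier (k + 1)
  set x := arraySize (k + 1) m
  have hg : id ≤ g := id_le_ackHier k
  have hx : 6 ≤ x := by have := lt_arraySize (k + 1) m; omega
  have hxy : x ≤ g^[2] x := Function.id_le_iterate_of_id_le hg 2 x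
  have hyz : g^[2] x ≤ g^[4] x := Function.id_le_iterate_of_id_le hg 2 (g^[2] x)
  have hy : arraySize k F₃ ≤ g^[2] x := arraySize_le hx hF₃
  have hz : arraySize k N₂ ≤ g^[4] x := arraySize_le (hx.trans hxy) (hN₂.trans hy)
  have hprod (n : ℕ) (hn : n ≤ x) : F₁ * F₂ * n ≤ g^[4] x ^ 3 := by
    rw [pow_three']
    exact Nat.mul_le_mul (Nat.mul_le_mul (hF₁.trans hz) (hF₂.trans (hy.trans hyz)))
      (hn.trans (hxy.trans hyz))
  have hbound := add_pow_three_le_arraySize k m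
  exact ⟨((hprod F₃ hF₃).trans (Nat.le_add_left _ _)).trans hbound,
    (Nat.add_le_add (hN₁.trans hz) (hprod N₃ hN₃)).trans hbound⟩

lemma exists_isAdmissibleArray_succ {t : ℕ}
    (hD : ∀ k m, ∃ F N, 0 < F ∧ F ≤ arraySize k m ∧ N ≤ arraySize k m ∧
      ∃ D : Fin F → Fin m → Fin N, IsDSFreeArray t (2 ^ k.choose t) D) (k m : ℕ) :
    ∃ F N, 0 < F ∧ F ≤ arraySize k m ∧ N ≤ arraySize k m ∧
      ∃ X : Fin F → Fin m → Fin N, IsAdmissibleArray (t + 1) (2 ^ k.choose (t + 1)) X := by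
  induction k generalizing m with
  | zero =>
    have := lt_arraySize 0 m
    exact ⟨1, m, one_pos, by omega, by omega, _, isAdmissibleArray_id (t + 1)⟩
  | succ k ihk =>
    induction m with
    | zero =>
      have := lt_arraySize (k + 1) 0
      exact ⟨1, 0, one_pos, by omega, by omega, fun _ j => j,
        isAdmissibleArray_of_isEmpty (t + 1) _ _⟩
    | succ m ihm =>
      obtain ⟨F₃, N₃, hF₃, hF₃le, hN₃le, X, hX⟩ := ihm
      obtain ⟨F₂, N₂, hF₂, hF₂le, hN₂le, D, hD⟩ := hD k F₃
      obtain ⟨F₁, N₁, hF₁, hF₁le, hN₁le, A, hA⟩ := ihk N₂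
      have hpow : 2 ^ (k + 1).choose (t + 1) = 2 ^ k.choose (t + 1) * 2 ^ k.choose t := by
        rw [Nat.choose_succ_succ', add_comm, pow_add]
      obtain ⟨Y, hY⟩ := hA.exists_prepend_substitute hD (hpow ▸ hX)
      obtain ⟨hF, hN⟩ := add_mul_le_arraySize hF₃le hN₃le hF₂le hN₂le hF₁le hN₁le
      exact ⟨_, _, by positivity, hF, hN, Y, hpow ▸ hY⟩

lemma exists_isDSFreeArray (t k m : ℕ) :
    ∃ F N, 0 < F ∧ F ≤ arraySize k m ∧ N ≤ arraySize k m ∧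
      ∃ X : Fin F → Fin m → Fin N, IsDSFreeArray t (2 ^ k.choose t) X := by
  induction t generalizing k m with
  | zero =>
    have := lt_arraySize k m
    exact ⟨2, m, two_pos, by omega, by omega, _, by simpa using isDSFreeArray_id_rev m⟩
  | succ t ih =>
    obtain ⟨F, N, hF, hFle, hNle, X, hX⟩ := exists_isAdmissibleArray_succ ih k m
    exact ⟨F, N, hF, hFle, hNle, X, hX.isDSFreeArray⟩

lemma exists_isAdmissibleArray (t k m : ℕ) :
    ∃ F N, 0 < F ∧ F ≤ arraySize k m ∧ N ≤ arraySize k m ∧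
      ∃ X : Fin F → Fin m → Fin N, IsAdmissibleArray (t + 1) (2 ^ k.choose (t + 1)) X :=
  exists_isAdmissibleArray_succ (exists_isDSFreeArray t) k m

end Existence

section Matrices

lemma IsDSFreeArray.card_mul_card {R J C : Type*} [Preorder R] [Preorder J] [Preorder C] [Finite R]
    [Finite J] [Fintype C] {t μ : ℕ} {X : R → J → C} (h : IsDSFreeArray t μ X) :
    Nat.card R * Nat.card J = Fintype.card C * μ := by
  have : Finite (R ×ₗ J) := inferInstanceAs (Finite (R × J))
  calc Nat.card R * Nat.card J = Nat.card (R ×ₗ J) := (Nat.card_prod R J).symm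
    _ = Nat.card (Σ c, occurrences X c) :=
        (Nat.card_congr (Equiv.sigmaFiberEquiv fun p : R ×ₗ J => X (ofLex p).1 (ofLex p).2)).symm
    _ = ∑ c, (occurrences X c).ncard := Nat.card_sigma
    _ = Fintype.card C * μ := by simp [h.ncard_occurrences]

lemma IsAdmissibleArray.exists_matrix {R J C : Type*} [LinearOrder R] [LinearOrder J]
    [LinearOrder C] {t μ n : ℕ} {X : R → J → C} (h : IsAdmissibleArray (t + 1) μ X) {ρ : Fin n → R}
    {χ : Fin n → C} (hρ : StrictMono ρ) (hχ : StrictMono χ)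
    (hrange : ∀ j, rowsOf X (χ j) ⊆ Set.range ρ) :
    ∃ M : Fin n → Fin n → Bool, ¬ MatContains M (DS (2 * (t + 1) + 3)) ∧ ∀ j, colOnes M j = μ := by
  classical
  let M : Fin n → Fin n → Bool := fun i j => decide (ρ i ∈ rowsOf X (χ j))
  have hM (j : Fin n) : {i | M i j = true} = ρ ⁻¹' rowsOf X (χ j) :=
    Set.ext fun i => decide_eq_true_iff
  refine ⟨M, fun hcontains => ?_, fun j => ?_⟩
  · obtain ⟨a, b, hab, halt⟩ := (matContains_DS_iff M).1 hcontains
    rw [hM, hM] at halt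
    exact (h.admissible _ _ (hχ hab)).not_hasAlternation_of_injOn hρ.monotone hρ.injective.injOn
      (Set.mapsTo_preimage ρ _) (Set.mapsTo_preimage ρ _) halt
  · calc colOnes M j = (ρ ⁻¹' rowsOf X (χ j)).ncard := congrArg Set.ncard (hM j)
      _ = (rowsOf X (χ j)).ncard :=
          Set.ncard_preimage_of_injective_subset_range hρ.injective (hrange j)
      _ = μ := h.ncard_rowsOf _

lemma strictMono_toLex_divModEquiv (m : ℕ) [NeZero m] :
    StrictMono fun i : ℕ => toLex (Nat.divModEquiv m i) := by
  intro i j hij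
  refine Prod.Lex.toLex_lt_toLex'.2 ⟨Nat.div_le_div_right hij.le, fun hdiv => ?_⟩
  have hi := Nat.div_add_mod i m
  have hj := Nat.div_add_mod j m
  change i / m = j / m at hdiv
  change Fin.ofNat m i < Fin.ofNat m j
  rw [Fin.lt_def, Fin.val_ofNat, Fin.val_ofNat]
  rw [hdiv] at hi
  omega

lemma IsAdmissibleArray.exists_matrix_of_fin {J : Type*} [LinearOrder J] {t μ F N n : ℕ}
    {X : Fin F → J → Fin N} (h : IsAdmissibleArray (t + 1) μ X) (hF : 0 < F) (hFn : F ≤ n)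
    (hFN : 2 * F ≤ N) :
    ∃ M : Fin n → Fin n → Bool, ¬ MatContains M (DS (2 * (t + 1) + 3)) ∧ ∀ j, colOnes M j = μ := by
  have : NeZero F := ⟨hF.ne'⟩
  have : NeZero N := ⟨by omega⟩
  refine (h.copies (U := ℕ)).exists_matrix
    ((strictMono_toLex_divModEquiv F).comp Fin.val_strictMono)
    ((strictMono_toLex_divModEquiv N).comp Fin.val_strictMono) fun j => ?_
  rintro _ hr
  obtain ⟨r, -, rfl⟩ := (rowsOf_copies X _ _).subset hr
  have hlt : j.val / N * F + r < n := by
    rcases Nat.eq_zero_or_pos (j.val / N) with hq | hq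
    · rw [hq]
      omega
    · calc j.val / N * F + r < j.val / N * F + j.val / N * F := by
            gcongr
            exact r.isLt.trans_le (Nat.le_mul_of_pos_left F hq)
        _ = j.val / N * (2 * F) := by ring
        _ ≤ j.val / N * N := by gcongr
        _ ≤ n := (Nat.div_mul_le_self _ _).trans j.isLt.le
  exact ⟨⟨_, hlt⟩, congrArg toLex ((Nat.divModEquiv F).apply_symm_apply (j.val / N, r))⟩

lemma arraySize_le_ackHier_three (t k : ℕ) :
    arraySize k (2 * 2 ^ k.choose t) ≤ ackHier (k + 4) 3 := by
  refine (ackHier_monotone _ ?_).trans (ackHier_two_pow_two_pow_le k)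
  have hchoose : k.choose t + 5 ≤ 2 ^ (k + 4) := by
    have := Nat.choose_le_two_pow k t
    have := Nat.one_le_two_pow (n := k)
    rw [pow_add]
    omega
  calc 6 * (2 * 2 ^ k.choose t + 1) ≤ 2 ^ k.choose t * 2 ^ 5 := by
        have := Nat.one_le_two_pow (n := k.choose t)
        omega
    _ = 2 ^ (k.choose t + 5) := (pow_add ..).symm
    _ ≤ 2 ^ 2 ^ (k + 4) := Nat.pow_le_pow_right two_pos hchoose

lemma exists_matrix_of_ackHier_three_le (t : ℕ) {k n : ℕ} (hn : ackHier (k + 4) 3 ≤ n) :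
    ∃ M : Fin n → Fin n → Bool, ¬ MatContains M (DS (2 * (t + 1) + 3)) ∧
      ∀ j, colOnes M j = 2 ^ k.choose (t + 1) := by
  obtain ⟨F, N, hF, hFle, -, X, hX⟩ := exists_isAdmissibleArray t k (2 * 2 ^ k.choose (t + 1))
  have hcard := hX.isDSFreeArray.card_mul_card
  simp only [Nat.card_eq_fintype_card, Fintype.card_fin, ← mul_assoc] at hcard
  refine hX.exists_matrix_of_fin hF (hFle.trans ((arraySize_le_ackHier_three _ k).trans hn)) ?_
  rw [mul_comm]
  exact (Nat.eq_of_mul_eq_mul_right (by positivity) hcard).le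

lemma exists_matrix (t : ℕ) {n : ℕ} (hn : 1 ≤ n) :
    ∃ M : Fin n → Fin n → Bool, ¬ MatContains M (DS (2 * (t + 1) + 3)) ∧
      ∀ j, colOnes M j = 2 ^ (invAck n - 6).choose (t + 1) := by
  rcases le_or_gt (invAck n) 6 with hα | hα
  · rw [Nat.sub_eq_zero_of_le hα]
    exact (isAdmissibleArray_id (C := Fin 2) (t + 1)).exists_matrix_of_fin one_pos hn le_rfl
  · exact exists_matrix_of_ackHier_three_le t (ackHier_three_lt_of_lt_invAck (by omega)).le

lemma matOnes_eq_sum_colOnes {m n : ℕ} (M : Fin m → Fin n → Bool) :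
    matOnes M = ∑ j, colOnes M j := by
  let e : {p : Fin m × Fin n // M p.1 p.2 = true} ≃ Σ j : Fin n, {i : Fin m // M i j = true} :=
    { toFun := fun p => ⟨p.1.2, p.1.1, p.2⟩
      invFun := fun x => ⟨(x.2.1, x.1), x.2.2⟩
      left_inv := fun _ => rfl
      right_inv := fun _ => rfl }
  exact (Nat.card_congr e).trans Nat.card_sigma

lemma matOnes_le_exMat {p q n : ℕ} {S : Fin p → Fin q → Bool} {M : Fin n → Fin n → Bool}
    (hM : ¬ MatContains M S) : matOnes M ≤ exMat S n := by
  refine le_csSup ⟨Nat.card (Fin n × Fin n), ?_⟩ ⟨M, hM, rfl⟩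
  rintro _ ⟨M', -, rfl⟩
  exact Finite.card_subtype_le _

lemma mul_le_exMat {p q n : ℕ} {S : Fin p → Fin q → Bool} {M : Fin n → Fin n → Bool} {x : ℝ}
    (hM : ¬ MatContains M S) (hx : ∀ j, x ≤ colOnes M j) : n * x ≤ exMat S n :=
  calc n * x = ∑ _j : Fin n, x := by simp
    _ ≤ ∑ j, (colOnes M j : ℝ) := Finset.sum_le_sum fun j _ => hx j
    _ = (matOnes M : ℝ) := by rw [matOnes_eq_sum_colOnes, Nat.cast_sum]
    _ ≤ exMat S n := Nat.cast_le.2 (matOnes_le_exMat hM)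

end Matrices

section Exponent

lemma pow_sub_le_sub_pow (a s t : ℕ) :
    (a : ℝ) ^ t - t * s * (a : ℝ) ^ (t - 1) ≤ ((a - s : ℕ) : ℝ) ^ t := by
  have hb : ((a - s : ℕ) : ℝ) ≤ a := Nat.cast_le.2 (Nat.sub_le a s)
  have hs : (a : ℝ) ≤ (a - s : ℕ) + s := mod_cast le_tsub_add
  have h := (le_abs_self _).trans (abs_pow_sub_pow_le (a : ℝ) (a - s : ℕ) t)
  rw [abs_of_nonneg (sub_nonneg.2 hb), Nat.abs_cast, Nat.abs_cast, max_eq_left hb] at h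
  have : ((a : ℝ) - (a - s : ℕ)) * t * (a : ℝ) ^ (t - 1) ≤ t * s * (a : ℝ) ^ (t - 1) := by
    rw [mul_comm (t : ℝ)]
    gcongr
    linarith
  linarith

lemma sub_le_choose (a s t : ℕ) :
    1 / (t.factorial : ℝ) * (a : ℝ) ^ t - t * (s + t) / t.factorial * (a : ℝ) ^ (t - 1) ≤
      (a - s).choose t := by
  have hdesc : (a - (s + t)) ^ t ≤ t.factorial * (a - s).choose t :=
    calc (a - (s + t)) ^ t ≤ (a - s + 1 - t) ^ t := Nat.pow_le_pow_left (by omega) t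
      _ ≤ (a - s).descFactorial t := Nat.pow_sub_le_descFactorial _ _
      _ = t.factorial * (a - s).choose t := Nat.descFactorial_eq_factorial_mul_choose _ _
  calc 1 / (t.factorial : ℝ) * (a : ℝ) ^ t - t * (s + t) / t.factorial * (a : ℝ) ^ (t - 1)
      = ((a : ℝ) ^ t - t * (s + t : ℕ) * (a : ℝ) ^ (t - 1)) / t.factorial := by
        push_cast
        ring
    _ ≤ ((a - (s + t) : ℕ) : ℝ) ^ t / t.factorial := by
        gcongr
        exact pow_sub_le_sub_pow a (s + t) t
    _ ≤ (a - s).choose t := by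
        rw [div_le_iff₀' (by positivity)]
        exact_mod_cast hdesc

end Exponent

/-- For every `t ≥ 1` there is a constant `C_t` such that for every
`n ≥ 1` there exists an `n × n` (0,1)-matrix avoiding `DS_{2t+3}` with at least
`2^((1/t!)·α(n)^t − C_t·α(n)^(t−1))` `1`-entries in every column; in particular
`ex_{DS_{2t+3}}(n) ≥ n·2^((1/t!)·α(n)^t − C_t·α(n)^(t−1))`. -/
theorem ds_odd_avoiding_construction :
    ∀ t : ℕ, 1 ≤ t → ∃ C : ℝ, ∀ n : ℕ, 1 ≤ n →
      (∃ M : Fin n → Fin n → Bool, ¬ MatContains M (DS (2 * t + 3)) ∧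
        ∀ j : Fin n, (2 : ℝ) ^ ((1 / (Nat.factorial t : ℝ)) * (invAck n : ℝ) ^ t
          - C * (invAck n : ℝ) ^ (t - 1)) ≤ (colOnes M j : ℝ)) ∧
      (n : ℝ) * (2 : ℝ) ^ ((1 / (Nat.factorial t : ℝ)) * (invAck n : ℝ) ^ t
          - C * (invAck n : ℝ) ^ (t - 1)) ≤ (exMat (DS (2 * t + 3)) n : ℝ) := by
  intro t ht
  refine ⟨t * (6 + t) / t.factorial, fun n hn => ?_⟩
  obtain ⟨M, hM, hones⟩ : ∃ M : Fin n → Fin n → Bool, ¬ MatContains M (DS (2 * t + 3)) ∧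
      ∀ j, colOnes M j = 2 ^ (invAck n - 6).choose t := by
    obtain ⟨t, rfl⟩ := Nat.exists_eq_add_of_le' ht
    exact exists_matrix t hn
  have hcol (j : Fin n) : (2 : ℝ) ^ (1 / (t.factorial : ℝ) * (invAck n : ℝ) ^ t -
      t * (6 + t) / t.factorial * (invAck n : ℝ) ^ (t - 1)) ≤ colOnes M j := by
    rw [hones, Nat.cast_pow, Nat.cast_ofNat, ← Real.rpow_natCast 2]
    exact Real.rpow_le_rpow_of_exponent_le one_le_two (mod_cast sub_le_choose (invAck n) 6 t)
  exact ⟨⟨M, hM, hcol⟩, mul_le_exMat hM hcol⟩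
end

section
/- For every integer k ≥ 1 and every integer n ≥ 1, every n×n (0,1)-matrix that avoids DS_{k+1} is not (k+1)-full; consequently, p_k(n) ≥ ex_{DS_{k+1}}(n). -/
/-!
Suppose every enumeration of a set `S` of columns can be read off, in increasing rows, from the
`1`-entries of `M`. Let `t` be the latest among the first rows at which the columns of `S` have a
`1`-entry, attained by the column `j`. Enumerations that start with `j` leave row `t` behind at
once, so every enumeration of `S \ {j}` can be read off strictly below row `t`; on the other hand
every column of `S` already has a `1`-entry in a row `≤ t`. By induction two columns of `S \ {j}`
alternate, in both orders, below row `t`, and either alternation can be extended by one letter at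
its beginning. Starting the alternation with the right-hand column yields `DS`.
-/

open Function

section Words

variable {α β : Type*}

/-- The word `w` is read off from the `1`-entries of a (0,1)-matrix in increasing rows. The matrix
is encoded as the relation `R` between its rows `α` and columns `β`; letters are columns. -/
def ContainsWord [Preorder α] (R : α → β → Prop) {k : ℕ} (w : Fin k → β) : Prop :=
  ∃ r : Fin k → α, StrictMono r ∧ ∀ i, R (r i) (w i)

/-- The word `abab⋯` of length `k`, the pattern of the columns of `DS_k` read row by row. Positions
are counted from `0`, so even positions carry `a`. -/
def alternatingWord (a b : β) (k : ℕ) : Fin k → β :=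
  fun i => if Even i.val then a else b

lemma alternatingWord_succ (a b : β) (k : ℕ) :
    alternatingWord a b (k + 1) = Fin.cons a (alternatingWord b a k) := by
  funext i
  cases i using Fin.cases with
  | zero => simp [alternatingWord]
  | succ i => by_cases hi : Even i.val <;> simp [alternatingWord, Nat.even_add_one, hi]

lemma alternatingWord_two (a b : β) : alternatingWord a b 2 = ![a, b] := by
  funext i
  fin_cases i <;> simp [alternatingWord]

/-- The part of the matrix `R` strictly below row `t`, where rows are numbered from top to bottom;
the full row type is kept and the other rows are emptied. -/
def rowsBelow [LT α] (R : α → β → Prop) (t : α) : α → β → Prop :=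
  fun x b => t < x ∧ R x b

lemma ContainsWord.rowsBelow_anti [Preorder α] {R : α → β → Prop} {t u : α} {k : ℕ}
    {w : Fin k → β} (hw : ContainsWord (rowsBelow R u) w) (htu : t ≤ u) :
    ContainsWord (rowsBelow R t) w :=
  let ⟨r, hr, hR⟩ := hw
  ⟨r, hr, fun i => ⟨htu.trans_lt (hR i).1, (hR i).2⟩⟩

lemma containsWord_cons [Preorder α] {R : α → β → Prop} {k : ℕ} {b : β} {w : Fin k → β} :
    ContainsWord R (Fin.cons b w : Fin (k + 1) → β) ↔
      ∃ x, R x b ∧ ContainsWord (rowsBelow R x) w := by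
  constructor
  · rintro ⟨r, hr, hR⟩
    exact ⟨r 0, hR 0, r ∘ Fin.succ, hr.comp Fin.strictMono_succ,
      fun i => ⟨hr i.succ_pos, hR i.succ⟩⟩
  · rintro ⟨x, hx, r, hr, hR⟩
    exact ⟨Fin.cons x r, Fin.strictMono_cons.mpr ⟨fun i => (hR i).1, hr⟩,
      Fin.cases hx fun i => (hR i).2⟩

/-- Every `k`-arrangement of the set `S` of columns, that is, every word of `k` distinct letters
from `S`, is contained in the matrix `R`. A matrix is `k`-full when this holds for some `S` with
exactly `k` elements. -/
def ContainsArrangements [Preorder α] (R : α → β → Prop) (S : Finset β) (k : ℕ) : Prop :=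
  ∀ w : Fin k → β, Injective w → (∀ i, w i ∈ S) → ContainsWord R w

namespace ContainsArrangements

lemma exists_containsWord_rowsBelow [Preorder α] [DecidableEq β] {R : α → β → Prop}
    {S : Finset β} {k : ℕ} (h : ContainsArrangements R S (k + 1)) {j : β} (hj : j ∈ S)
    {w : Fin k → β} (hw : Injective w) (hwS : ∀ i, w i ∈ S.erase j) :
    ∃ x, R x j ∧ ContainsWord (rowsBelow R x) w := by
  have hjw : j ∉ Set.range w := by
    rintro ⟨i, hi⟩
    exact Finset.ne_of_mem_erase (hwS i) hi
  exact containsWord_cons.mp <| h _ (Fin.cons_injective_iff.mpr ⟨hjw, hw⟩)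
    (Fin.cases hj fun i => Finset.mem_of_mem_erase (hwS i))

lemma exists_row [Preorder α] {R : α → β → Prop} {S : Finset β} {k : ℕ}
    (h : ContainsArrangements R S (k + 1)) (hS : k + 1 ≤ S.card) {j : β} (hj : j ∈ S) :
    ∃ x, R x j := by
  classical
  obtain ⟨w⟩ : Nonempty (Fin k ↪ S.erase j) := by
    apply Embedding.nonempty_of_card_le
    rw [Fintype.card_fin, Fintype.card_coe, Finset.card_erase_of_mem hj]
    omega
  obtain ⟨x, hx, -⟩ := h.exists_containsWord_rowsBelow hj
    (Subtype.val_injective.comp w.injective) fun i => (w i).2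
  exact ⟨x, hx⟩

lemma erase_rowsBelow [Preorder α] [DecidableEq β] {R : α → β → Prop} {S : Finset β} {k : ℕ}
    (h : ContainsArrangements R S (k + 1)) {j : β} (hj : j ∈ S) {t : α}
    (ht : ∀ x, R x j → t ≤ x) : ContainsArrangements (rowsBelow R t) (S.erase j) k := by
  intro w hw hwS
  obtain ⟨x, hx, hwx⟩ := h.exists_containsWord_rowsBelow hj hw hwS
  exact hwx.rowsBelow_anti (ht x hx)

end ContainsArrangements

lemma exists_latest_first_row [LinearOrder α] [WellFoundedLT α] {R : α → β → Prop} {S : Finset β}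
    (hS : S.Nonempty) (hR : ∀ b ∈ S, ∃ x, R x b) :
    ∃ t, (∀ b ∈ S, ∃ x ≤ t, R x b) ∧ ∃ j ∈ S, ∀ x, R x j → t ≤ x := by
  have hfirst : ∀ b : S, ∃ x, R x b ∧ ∀ y, R y b → x ≤ y := fun b =>
    let ⟨x, hx, hmin⟩ := wellFounded_lt.has_min {x | R x b} (hR b b.2)
    ⟨x, hx, fun y hy => not_lt.mp (hmin y hy)⟩
  choose first hfirstR hfirst_le using hfirst
  obtain ⟨j, -, hj⟩ := S.attach.exists_max_image first hS.attach
  exact ⟨first j, fun b hb => ⟨first ⟨b, hb⟩, hj _ (S.mem_attach _), hfirstR _⟩,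
    j, j.2, hfirst_le j⟩

-- Asking for both alternations makes the induction symmetric: each extends the other by one letter.
lemma ContainsArrangements.exists_alternatingWord [LinearOrder α] [WellFoundedLT α]
    {R : α → β → Prop} {S : Finset β} {k : ℕ} (h : ContainsArrangements R S (k + 2))
    (hS : k + 2 ≤ S.card) :
    ∃ a ∈ S, ∃ b ∈ S, a ≠ b ∧ ContainsWord R (alternatingWord a b (k + 2)) ∧
      ContainsWord R (alternatingWord b a (k + 2)) := by
  classical
  induction k generalizing R S with
  | zero =>
    obtain ⟨a, ha, b, hb, hab⟩ := Finset.one_lt_card.mp hS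
    have hpair : ∀ c ∈ S, ∀ d ∈ S, c ≠ d → ContainsWord R (alternatingWord c d 2) := by
      intro c hc d hd hcd
      rw [alternatingWord_two]
      exact h _ (by simpa [Fin.cons_injective_iff]) (by simp [Fin.forall_fin_two, hc, hd])
    exact ⟨a, ha, b, hb, hab, hpair a ha b hb hab, hpair b hb a ha hab.symm⟩
  | succ k ih =>
    obtain ⟨t, ht, j, hj, htj⟩ :=
      exists_latest_first_row (Finset.card_pos.mp (by omega)) fun _ => h.exists_row hS
    have hcard : k + 2 ≤ (S.erase j).card := by
      rw [Finset.card_erase_of_mem hj]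
      omega
    obtain ⟨a, ha, b, hb, hab, hwab, hwba⟩ := ih (h.erase_rowsBelow hj htj) hcard
    have hprepend : ∀ c ∈ S, ∀ d, ContainsWord (rowsBelow R t) (alternatingWord d c (k + 2)) →
        ContainsWord R (alternatingWord c d (k + 3)) := by
      intro c hc d hw
      obtain ⟨x, hxt, hx⟩ := ht c hc
      rw [alternatingWord_succ]
      exact containsWord_cons.mpr ⟨x, hx, hw.rowsBelow_anti hxt⟩
    have haS := Finset.mem_of_mem_erase ha
    have hbS := Finset.mem_of_mem_erase hb
    exact ⟨a, haS, b, hbS, hab, hprepend a haS b hwba, hprepend b hbS a hwab⟩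

end Words

-- Row `0` of `DS s` has its `1`-entry in column `1`, so the word starts with the larger column.
lemma ContainsWord.matContains_DS {m n s : ℕ} {M : Fin m → Fin n → Bool} {a b : Fin n}
    (hab : a < b) (h : ContainsWord (M · · = true) (alternatingWord b a s)) :
    MatContains M (DS s) := by
  obtain ⟨r, hr, hM⟩ := h
  have hletter : ∀ i j, DS s i j = true → ![a, b] j = alternatingWord b a s i := by
    intro i j hij
    have hodd : Odd (i.val + j.val) := Nat.odd_iff.mpr (of_decide_eq_true hij)
    fin_cases j <;> simp_all [alternatingWord, Nat.odd_add_one]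
  exact ⟨r, ![a, b], hr, by simpa [Fin.strictMono_iff_lt_succ],
    fun i j hij => hletter i j hij ▸ hM i⟩

lemma IsFull.exists_containsArrangements {k n : ℕ} {M : Fin n → Fin n → Bool} (hM : IsFull k M) :
    ∃ S : Finset (Fin n), S.card = k ∧ ContainsArrangements (M · · = true) S k := by
  obtain ⟨c, hc, hperm⟩ := hM
  refine ⟨Finset.univ.map ⟨c, hc.injective⟩, by simp, fun w hw hwS => ?_⟩
  simp only [Finset.mem_map, Finset.mem_univ, true_and, Embedding.coeFn_mk] at hwS
  choose e he using hwS
  have he_inj : Injective e := fun i j hij => hw (by rw [← he i, ← he j, hij])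
  let σ : Equiv.Perm (Fin k) := Equiv.ofBijective e (Finite.injective_iff_bijective.mp he_inj)
  obtain ⟨r, hr, hrM⟩ := hperm σ.symm
  refine ⟨r, hr, fun i => ?_⟩
  have hi := hrM (σ i)
  rwa [σ.symm_apply_apply, Equiv.ofBijective_apply, he] at hi

lemma IsFull.matContains_DS {k n : ℕ} {M : Fin n → Fin n → Bool} (hM : IsFull (k + 2) M) :
    MatContains M (DS (k + 2)) := by
  obtain ⟨S, hS, harr⟩ := hM.exists_containsArrangements
  obtain ⟨a, -, b, -, hab, hwab, hwba⟩ := harr.exists_alternatingWord hS.ge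
  rcases hab.lt_or_gt with hlt | hgt
  · exact hwba.matContains_DS hlt
  · exact hwab.matContains_DS hgt

lemma bddAbove_matOnes {m n : ℕ} (s : Set (Fin m → Fin n → Bool)) : BddAbove (matOnes '' s) :=
  (s.toFinite.image matOnes).bddAbove

/-- For every `k ≥ 1` and `n ≥ 1`, every `n × n` (0,1)-matrix avoiding
`DS_{k+1}` is not `(k+1)`-full; consequently `p_k(n) ≥ ex_{DS_{k+1}}(n)`. -/
theorem ds_avoiding_not_full :
    ∀ k : ℕ, 1 ≤ k → ∀ n : ℕ, 1 ≤ n →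
      (∀ M : Fin n → Fin n → Bool, ¬ MatContains M (DS (k + 1)) → ¬ IsFull (k + 1) M) ∧
      exMat (DS (k + 1)) n ≤ pFull k n := by
  intro k hk n _
  obtain ⟨k, rfl⟩ := Nat.exists_eq_add_of_le' hk
  have hnot : ∀ M : Fin n → Fin n → Bool, ¬ MatContains M (DS (k + 2)) → ¬ IsFull (k + 2) M :=
    fun M hM hfull => hM hfull.matContains_DS
  exact ⟨hnot, csSup_le_csSup' (bddAbove_matOnes _) (Set.image_mono hnot)⟩
end
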